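/- The two-variable quaternionic Mahler measure of x² − y² vanishes: ∫_{T¹(ℍ)×T¹(ℍ)} log|x² − y²| d(μ⊗μ)(x,y) = 0. -/

import Mathlib

open MeasureTheory Quaternion

noncomputable instance : MeasurableSpace (Quaternion ℝ) := borel _
instance : BorelSpace (Quaternion ℝ) := ⟨rfl⟩
instance : Nonempty (Metric.sphere (0 : Quaternion ℝ) 1) := ⟨⟨1, by simp⟩⟩

/-- The probability Haar measure `μ` on the group `T¹(ℍ)` of unit quaternions
(the Haar measure normalized so that the whole group has measure `1`). -/
noncomputable def muH : Measure (Metric.sphere (0 : Quaternion ℝ) 1) :=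
  Measure.haarMeasure ⊤

/-- The quaternionic Mahler measure `m_ℍ(f) = ∫_{T¹(ℍ)} log |f(q)| dμ(q)`. -/
noncomputable def mahlerH (f : Quaternion ℝ → Quaternion ℝ) : ℝ :=
  ∫ q : Metric.sphere (0 : Quaternion ℝ) 1, Real.log ‖f q‖ ∂muH
/-- The two-variable quaternionic Mahler measure
`m_ℍ(f) = ∫_{T¹(ℍ)×T¹(ℍ)} log |f(x,y)| d(μ⊗μ)(x,y)`. -/
noncomputable def mahlerH2 (f : Quaternion ℝ → Quaternion ℝ → Quaternion ℝ) : ℝ :=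
  ∫ p : (Metric.sphere (0 : Quaternion ℝ) 1) × (Metric.sphere (0 : Quaternion ℝ) 1),
    Real.log ‖f p.1 p.2‖ ∂(muH.prod muH)

/-!
For unit quaternions `x`, `z`, `|x² - (xz)²| = |z̄x - xz| = |(im z)x + x(im z)|`. The component
`p` of `x` in the plane spanned by `1` and `z` commutes with `im z`, and the orthogonal component
anticommutes with it, so this norm is `2|p||im z|`. Substituting `y = xz`, the moments of
`|x² - y²|` therefore factor into moments of projections of a uniform unit quaternion, onto a plane
and onto the 3-space of imaginary quaternions. Those are quotients of Gaussian moments, because a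
Gaussian vector is its norm times an independent uniform unit vector and its orthogonal projections
are Gaussian. By Legendre's duplication formula the result is
`E|x² - y²|ᵗ = Γ(2 + t) / Γ(2 + t/2)²` for `t > -2`, and the Mahler measure is its derivative at
`t = 0`, namely `ψ(2) - 2 · ψ(2)/2 = 0`.
-/

open ProbabilityTheory Real Module Topology Metric

section GaussianMoments

lemma lintegral_norm_rpow_mul_exp_neg_mul_sq {E : Type*} [NormedAddCommGroup E] [NormedSpace ℝ E]
    [FiniteDimensional ℝ E] [Nontrivial E] [MeasurableSpace E] [BorelSpace E] (μ : Measure E)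
    [μ.IsAddHaarMeasure] {b t : ℝ} (hb : 0 < b) (ht : -finrank ℝ E < t) :
    ∫⁻ v, ENNReal.ofReal (‖v‖ ^ t * exp (-b * ‖v‖ ^ 2)) ∂μ =
      ENNReal.ofReal (finrank ℝ E * μ.real (ball 0 1) *
        (b ^ (-(finrank ℝ E + t) / 2) * (1 / 2) * Gamma ((finrank ℝ E + t) / 2))) := by
  set n : ℝ := (finrank ℝ E : ℝ) with hn
  have hradial : Set.EqOn (fun r : ℝ => r ^ (finrank ℝ E - 1) • (r ^ t * exp (-b * r ^ 2)))
      (fun r => r ^ (n - 1 + t) * exp (-b * r ^ 2)) (Set.Ioi 0) := fun r hr => by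
    have hpow : r ^ (finrank ℝ E - 1) = r ^ (n - 1) := by
      rw [hn, ← Nat.cast_pred finrank_pos, rpow_natCast]
    simp only [smul_eq_mul, ← mul_assoc, hpow, ← rpow_add hr]
  have hint : Integrable (fun v : E => ‖v‖ ^ t * exp (-b * ‖v‖ ^ 2)) μ := by
    rw [integrable_fun_norm_addHaar μ (f := fun r => r ^ t * exp (-b * r ^ 2)),
      integrableOn_congr_fun hradial measurableSet_Ioi]
    exact integrableOn_rpow_mul_exp_neg_mul_sq hb (by linarith)
  rw [← ofReal_integral_eq_lintegral_ofReal hint (.of_forall fun v => by positivity),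
    integral_fun_norm_addHaar μ fun r => r ^ t * exp (-b * r ^ 2),
    setIntegral_congr_fun measurableSet_Ioi hradial, nsmul_eq_mul, smul_eq_mul, mul_assoc]
  have := integral_rpow_mul_exp_neg_mul_rpow two_pos (q := n - 1 + t) (by linarith) hb
  simp only [rpow_two, show n - 1 + t + 1 = n + t by ring] at this
  rw [this]

variable {E : Type*} [NormedAddCommGroup E] [InnerProductSpace ℝ E] [FiniteDimensional ℝ E]
  [MeasurableSpace E] [BorelSpace E]

lemma stdGaussian_eq_withDensity : stdGaussian E = volume.withDensity
    fun v => ENNReal.ofReal ((2 * π) ^ (-(finrank ℝ E : ℝ) / 2) * exp (-(1 / 2) * ‖v‖ ^ 2)) := by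
  set c : ℝ := (2 * π) ^ (-(finrank ℝ E : ℝ) / 2) with hc_def
  have hint : Integrable fun v : E => c * exp (-(1 / 2) * ‖v‖ ^ 2) := by
    refine Integrable.const_mul ?_ c
    have := GaussianFourier.integrable_cexp_neg_mul_sq_norm_add (b := 1 / 2) (by norm_num) 0 (0 : E)
    refine this.norm.congr (.of_forall fun v => ?_)
    simp [Complex.norm_exp, ← Complex.ofReal_pow]
  have : IsFiniteMeasure (volume.withDensity fun v : E =>
      ENNReal.ofReal (c * exp (-(1 / 2) * ‖v‖ ^ 2))) :=
    isFiniteMeasure_withDensity_ofReal hint.2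
  have hc : (c : ℂ) * (π / (1 / 2 : ℂ)) ^ ((finrank ℝ E : ℂ) / 2) = 1 := by
    have hreal : c * (2 * π) ^ ((finrank ℝ E : ℝ) / 2) = 1 := by
      rw [hc_def, ← rpow_add two_pi_pos, neg_div, neg_add_cancel, rpow_zero]
    rw [show (π / (1 / 2) : ℂ) = (2 * π : ℝ) by push_cast; ring]
    have := Complex.ofReal_cpow two_pi_pos.le (finrank ℝ E / 2)
    push_cast at this ⊢
    rw [← this]
    exact_mod_cast hreal
  refine Measure.ext_of_charFun (funext fun t => ?_)
  rw [charFun_stdGaussian, charFun_apply, integral_withDensity_eq_integral_toReal_smul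
    (by fun_prop) (by simp)]
  calc Complex.exp (-‖t‖ ^ 2 / 2)
    _ = c * ∫ v : E, Complex.exp (-(1 / 2) * ‖v‖ ^ 2 + Complex.I * inner ℝ t v) := by
      rw [GaussianFourier.integral_cexp_neg_mul_sq_norm_add (by norm_num), ← mul_assoc, hc, one_mul,
        Complex.I_sq]
      ring_nf
    _ = _ := by
      rw [← integral_const_mul]
      congr with v
      rw [ENNReal.toReal_ofReal (by positivity), Complex.real_smul, real_inner_comm, add_comm,
        Complex.exp_add]
      push_cast
      ring_nf

lemma exists_lintegral_enorm_rpow_stdGaussian_eq [Nontrivial E] :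
    ∃ k : ℝ, ∀ t : ℝ, -finrank ℝ E < t → ∫⁻ v, ‖v‖ₑ ^ t ∂stdGaussian E =
      ENNReal.ofReal (k * 2 ^ (t / 2) * Gamma ((finrank ℝ E + t) / 2)) := by
  set n : ℝ := (finrank ℝ E : ℝ) with hn
  refine ⟨(2 * π) ^ (-n / 2) * (n * volume.real (ball (0 : E) 1)) * 2 ^ (n / 2) / 2,
    fun t ht => ?_⟩
  have hdensity : ∀ᵐ v : E,
      ENNReal.ofReal ((2 * π) ^ (-n / 2) * exp (-(1 / 2) * ‖v‖ ^ 2)) * ‖v‖ₑ ^ t =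
      ENNReal.ofReal ((2 * π) ^ (-n / 2)) *
        ENNReal.ofReal (‖v‖ ^ t * exp (-(1 / 2) * ‖v‖ ^ 2)) := by
    filter_upwards [Measure.ae_ne volume 0] with v hv
    rw [← ofReal_norm, ENNReal.ofReal_rpow_of_pos (norm_pos_iff.2 hv),
      ← ENNReal.ofReal_mul (by positivity), ← ENNReal.ofReal_mul (by positivity)]
    ring_nf
  rw [stdGaussian_eq_withDensity, lintegral_withDensity_eq_lintegral_mul _ (by fun_prop)
    (by fun_prop)]
  simp only [Pi.mul_apply, ← hn]
  rw [lintegral_congr_ae hdensity, lintegral_const_mul _ (by fun_prop),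
    lintegral_norm_rpow_mul_exp_neg_mul_sq _ (by norm_num) ht,
    ← ENNReal.ofReal_mul (by positivity), ← hn, neg_div _ (n + t), one_div (2 : ℝ),
    inv_rpow two_pos.le, ← rpow_neg two_pos.le, neg_neg, add_div, rpow_add two_pos]
  ring_nf

lemma lintegral_enorm_rpow_stdGaussian [Nontrivial E] {t : ℝ} (ht : -finrank ℝ E < t) :
    ∫⁻ v, ‖v‖ₑ ^ t ∂stdGaussian E = ENNReal.ofReal
      (2 ^ (t / 2) * Gamma ((finrank ℝ E + t) / 2) / Gamma (finrank ℝ E / 2)) := by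
  have hn : (0 : ℝ) < finrank ℝ E := Nat.cast_pos.2 finrank_pos
  obtain ⟨k, hk⟩ := exists_lintegral_enorm_rpow_stdGaussian_eq (E := E)
  have htotal : k * Gamma (finrank ℝ E / 2) = 1 := by
    rw [← ENNReal.ofReal_eq_one]
    simpa using (hk 0 (by linarith)).symm
  rw [hk t ht, eq_div_of_mul_eq (Gamma_pos_of_pos (by positivity)).ne' htotal]
  ring_nf

lemma map_orthogonalProjectionOnto_stdGaussian (K : Submodule ℝ E) :
    (stdGaussian E).map K.orthogonalProjectionOnto = stdGaussian K := by
  have := Measure.isProbabilityMeasure_map (μ := stdGaussian E)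
    K.orthogonalProjectionOnto.continuous.aemeasurable
  refine Measure.ext_of_charFun (funext fun t => ?_)
  calc charFun ((stdGaussian E).map K.orthogonalProjectionOnto) t
    _ = charFun (stdGaussian E) t := by
      rw [charFun_apply, integral_map (by fun_prop) (by fun_prop)]
      simp [charFun_apply]
    _ = charFun (stdGaussian K) t := by
      simp only [charFun_stdGaussian, Submodule.coe_norm]

lemma lintegral_enorm_starProjection_rpow_stdGaussian (K : Submodule ℝ E) [Nontrivial K] {t : ℝ}
    (ht : -finrank ℝ K < t) :
    ∫⁻ v, ‖K.starProjection v‖ₑ ^ t ∂stdGaussian E = ENNReal.ofReal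
      (2 ^ (t / 2) * Gamma ((finrank ℝ K + t) / 2) / Gamma (finrank ℝ K / 2)) := by
  rw [← lintegral_enorm_rpow_stdGaussian ht, ← map_orthogonalProjectionOnto_stdGaussian,
    lintegral_map (by fun_prop) (by fun_prop)]
  rfl

end GaussianMoments

section UnitSphere

variable {D : Type*} [NormedDivisionRing D] [NormedAlgebra ℝ D] [MeasurableSpace D] [BorelSpace D]
  {μ : Measure (sphere (0 : D) 1)} [μ.IsMulLeftInvariant]

lemma lintegral_sphere_norm_smul (f : D → ENNReal) (v : D) :
    ∫⁻ q : sphere (0 : D) 1, f (‖v‖ • (q : D)) ∂μ =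
      ∫⁻ q : sphere (0 : D) 1, f (v * q) ∂μ := by
  obtain rfl | hv := eq_or_ne v 0
  · simp
  let u : sphere (0 : D) 1 := ⟨‖v‖⁻¹ • v, by simp [norm_smul, hv]⟩
  rw [← lintegral_mul_left_eq_self _ u]
  simp [u, smul_smul, hv]

variable [IsProbabilityMeasure μ] {γ : Measure D} [SFinite γ]

lemma lintegral_lintegral_sphere_norm_smul [SecondCountableTopology D]
    (hγ : ∀ q : sphere (0 : D) 1, γ.map (· * (q : D)) = γ) {f : D → ENNReal}
    (hf : Measurable f) :
    ∫⁻ v, ∫⁻ q : sphere (0 : D) 1, f (‖v‖ • (q : D)) ∂μ ∂γ = ∫⁻ v, f v ∂γ := by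
  calc ∫⁻ v, ∫⁻ q : sphere (0 : D) 1, f (‖v‖ • (q : D)) ∂μ ∂γ
    _ = ∫⁻ q : sphere (0 : D) 1, ∫⁻ v, f (v * q) ∂γ ∂μ := by
      simp_rw [lintegral_sphere_norm_smul]
      exact lintegral_lintegral_swap (by fun_prop)
    _ = ∫⁻ _ : sphere (0 : D) 1, ∫⁻ v, f v ∂γ ∂μ := by
      congr with q
      rw [← lintegral_map hf (by fun_prop), hγ]
    _ = ∫⁻ v, f v ∂γ := by simp

lemma lintegral_enorm_rpow_mul_lintegral_sphere [SecondCountableTopology D] {F : Type*}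
    [SeminormedAddCommGroup F] [NormedSpace ℝ F]
    (hγ : ∀ q : sphere (0 : D) 1, γ.map (· * (q : D)) = γ) (L : D →L[ℝ] F) (t : ℝ) :
    (∫⁻ v, ‖v‖ₑ ^ t ∂γ) * ∫⁻ q : sphere (0 : D) 1, ‖L q‖ₑ ^ t ∂μ =
      ∫⁻ v, ‖L v‖ₑ ^ t ∂γ := by
  have hL : Measurable fun v => ‖L v‖ₑ ^ t := L.continuous.enorm.measurable.pow_const t
  rw [← lintegral_lintegral_sphere_norm_smul (μ := μ) hγ hL, ← lintegral_mul_const _ (by fun_prop)]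
  congr with v
  simp_rw [map_smul, enorm_smul, enorm_norm,
    ENNReal.mul_rpow_of_ne_top enorm_ne_top enorm_ne_top]
  exact (lintegral_const_mul _ (hL.comp measurable_subtype_coe)).symm

end UnitSphere

section MuH

instance : IsProbabilityMeasure muH :=
  ⟨by simpa [muH] using Measure.haarMeasure_self (K₀ := (⊤ : TopologicalSpace.PositiveCompacts
    (sphere (0 : ℍ[ℝ]) 1)))⟩

instance : muH.IsMulLeftInvariant := by
  unfold muH
  infer_instance

lemma map_mul_right_stdGaussian (q : sphere (0 : ℍ[ℝ]) 1) :
    (stdGaussian ℍ[ℝ]).map (· * (q : ℍ[ℝ])) = stdGaussian ℍ[ℝ] := by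
  let mulRight : ℍ[ℝ] →ₗᵢ[ℝ] ℍ[ℝ] := ⟨LinearMap.mulRight ℝ q, fun v => by simp⟩
  exact stdGaussian_map (mulRight.toLinearIsometryEquiv rfl)

lemma lintegral_enorm_starProjection_rpow_muH (K : Submodule ℝ ℍ[ℝ]) [Nontrivial K] {t : ℝ}
    (ht : -finrank ℝ K < t) :
    ∫⁻ q : sphere (0 : ℍ[ℝ]) 1, ‖K.starProjection q‖ₑ ^ t ∂muH = ENNReal.ofReal
      (Gamma ((finrank ℝ K + t) / 2) / (Gamma (finrank ℝ K / 2) * Gamma ((4 + t) / 2))) := by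
  have hK : (finrank ℝ K : ℝ) ≤ 4 := by
    exact_mod_cast Quaternion.finrank_eq_four (R := ℝ) ▸ K.finrank_le
  have hfull := lintegral_enorm_rpow_stdGaussian (E := ℍ[ℝ]) (t := t) (by
    rw [Quaternion.finrank_eq_four]; push_cast; linarith)
  have hpolar := lintegral_enorm_rpow_mul_lintegral_sphere (μ := muH) map_mul_right_stdGaussian
    K.starProjection t
  have hpos : 0 < (2 : ℝ) ^ (t / 2) * Gamma ((4 + t) / 2) :=
    mul_pos (by positivity) (Gamma_pos_of_pos (by linarith))
  rw [Quaternion.finrank_eq_four, show ((4 : ℕ) : ℝ) / 2 = 2 by norm_num, Gamma_two, div_one,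
    Nat.cast_ofNat] at hfull
  rw [hfull, lintegral_enorm_starProjection_rpow_stdGaussian K ht,
    ← ENNReal.eq_div_iff (ENNReal.ofReal_pos.2 hpos).ne' ENNReal.ofReal_ne_top,
    ← ENNReal.ofReal_div_of_pos hpos] at hpolar
  rw [hpolar]
  congr 1
  field_simp

end MuH

section QuaternionAlgebra

lemma norm_sq_sub_mul_sq {x z : ℍ[ℝ]} (hx : ‖x‖ = 1) (hz : ‖z‖ = 1) :
    ‖x ^ 2 - (x * z) ^ 2‖ = ‖z.im * x + x * z.im‖ := by
  have hzz : star z * z = 1 := by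
    rw [Quaternion.star_mul_self, Quaternion.normSq_eq_norm_mul_self, hz]
    norm_num
  have him : z.im * x + x * z.im = -(star z * (x - z * x * z)) := by
    have hstar : star z = z.re - z.im := by ext <;> simp
    have hxz : x * z = z.re * x + x * z.im := by
      rw [Quaternion.coe_commutes, ← mul_add, Quaternion.re_add_im]
    rw [mul_sub, ← mul_assoc, ← mul_assoc, hzz, one_mul, hstar, hxz]
    noncomm_ring
  calc ‖x ^ 2 - (x * z) ^ 2‖
    _ = ‖x * (x - z * x * z)‖ := by simp only [sq, mul_sub, mul_assoc]
    _ = ‖z.im * x + x * z.im‖ := by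
      rw [him, norm_neg, norm_mul, norm_mul, hx, Quaternion.norm_star, hz]

lemma commute_im_of_mem_span_one_pair {p z : ℍ[ℝ]} (hp : p ∈ Submodule.span ℝ {1, z}) :
    Commute z.im p := by
  obtain ⟨a, b, rfl⟩ := Submodule.mem_span_pair.1 hp
  have hz : Commute z.im z := by
    nth_rw 2 [← Quaternion.re_add_im z]
    exact .add_right (Quaternion.coe_commute _ _).symm (.refl _)
  exact .add_right ((Commute.one_right _).smul_right a) (hz.smul_right b)

lemma im_mul_eq_neg_mul_im_of_mem_orthogonal {y z : ℍ[ℝ]}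
    (hy : y ∈ (Submodule.span ℝ {1, z})ᗮ) : z.im * y = -(y * z.im) := by
  have hre : y.re = 0 := by
    simpa [Quaternion.inner_def] using
      Submodule.inner_right_of_mem_orthogonal (Submodule.subset_span (.inl rfl)) hy
  have hz : inner ℝ z y = 0 :=
    Submodule.inner_right_of_mem_orthogonal (Submodule.subset_span (.inr rfl)) hy
  simp only [Quaternion.inner_def, Quaternion.re_mul, Quaternion.re_star, Quaternion.imI_star,
    Quaternion.imJ_star, Quaternion.imK_star, hre] at hz
  ext <;> simp [hre] <;> linarith

lemma im_mul_add_mul_im (x z : ℍ[ℝ]) :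
    z.im * x + x * z.im =
      (2 : ℝ) • ((Submodule.span ℝ {1, z}).starProjection x * z.im) := by
  set K := Submodule.span ℝ {1, z}
  have hp := commute_im_of_mem_span_one_pair (K.starProjection_apply_mem x)
  have hy := im_mul_eq_neg_mul_im_of_mem_orthogonal (K.sub_starProjection_mem_orthogonal x)
  calc z.im * x + x * z.im
    _ = z.im * K.starProjection x + K.starProjection x * z.im +
        (z.im * (x - K.starProjection x) + (x - K.starProjection x) * z.im) := by noncomm_ring
    _ = (2 : ℝ) • (K.starProjection x * z.im) := by
      rw [hp.eq, hy, neg_add_cancel, add_zero, two_smul]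

lemma im_eq_starProjection (z : ℍ[ℝ]) : z.im = (ℝ ∙ (1 : ℍ[ℝ]))ᗮ.starProjection z := by
  rw [Submodule.starProjection_orthogonal_val, Submodule.starProjection_unit_singleton _ norm_one]
  ext <;> simp [Quaternion.inner_def]

lemma finrank_span_one_pair {z : ℍ[ℝ]} (hz : z.im ≠ 0) :
    finrank ℝ (Submodule.span ℝ {1, z}) = 2 := by
  have hindep : LinearIndependent ℝ ![1, z] := by
    refine LinearIndependent.pair_iff.2 fun a b hab => ?_
    have hb : b = 0 := by
      simpa [hz] using congrArg Quaternion.im hab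
    simp_all
  rw [← Matrix.range_cons_cons_empty 1 z ![], finrank_span_eq_card hindep, Fintype.card_fin]

end QuaternionAlgebra

section LogNorm

variable {Ω F : Type*} {mΩ : MeasurableSpace Ω} {P : Measure Ω} [NormedAddCommGroup F] {f : Ω → F}

lemma ae_ne_zero_of_lintegral_enorm_rpow_ne_top (hf : AEStronglyMeasurable f P) {t : ℝ}
    (ht : t < 0) (h : ∫⁻ ω, ‖f ω‖ₑ ^ t ∂P ≠ ⊤) : ∀ᵐ ω ∂P, f ω ≠ 0 := by
  filter_upwards [ae_lt_top' (hf.enorm.pow_const t) h] with ω hω hzero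
  simp [hzero, ENNReal.zero_rpow_of_neg ht] at hω

lemma ofReal_exp_mul_log_norm {v : F} (hv : v ≠ 0) (t : ℝ) :
    ENNReal.ofReal (exp (t * log ‖v‖)) = ‖v‖ₑ ^ t := by
  rw [← ofReal_norm, ENNReal.ofReal_rpow_of_pos (norm_pos_iff.2 hv),
    rpow_def_of_pos (norm_pos_iff.2 hv), mul_comm]

lemma integral_log_norm_eq_of_hasDerivAt_lintegral_enorm_rpow [NeZero P]
    (hf : AEStronglyMeasurable f P) {Z : ℝ → ℝ} {z : ℝ}
    (hZ : ∀ᶠ t in 𝓝 0, ∫⁻ ω, ‖f ω‖ₑ ^ t ∂P = ENNReal.ofReal (Z t)) (hz : HasDerivAt Z z 0) :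
    ∫ ω, log ‖f ω‖ ∂P = z := by
  have hne : ∀ᵐ ω ∂P, f ω ≠ 0 := by
    obtain ⟨t, hZt, ht⟩ := ((hZ.filter_mono nhdsWithin_le_nhds).and
      (self_mem_nhdsWithin (s := Set.Iio (0 : ℝ)))).exists
    exact ae_ne_zero_of_lintegral_enorm_rpow_ne_top hf ht (hZt ▸ ENNReal.ofReal_ne_top)
  have hexp (t : ℝ) :
      ∫⁻ ω, ENNReal.ofReal (exp (t * log ‖f ω‖)) ∂P = ∫⁻ ω, ‖f ω‖ₑ ^ t ∂P := by
    refine lintegral_congr_ae ?_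
    filter_upwards [hne] with ω hω using ofReal_exp_mul_log_norm hω t
  have hmeas (t : ℝ) : AEStronglyMeasurable (fun ω => exp (t * log ‖f ω‖)) P :=
    (hf.norm.aemeasurable.log.const_mul t).exp.aestronglyMeasurable
  have hinterior : 0 ∈ interior (integrableExpSet (fun ω => log ‖f ω‖) P) := by
    rw [mem_interior_iff_mem_nhds]
    filter_upwards [hZ] with t ht
    refine (lintegral_ofReal_ne_top_iff_integrable (hmeas t) (.of_forall fun _ => (exp_pos _).le)).1
      (hexp t ▸ ht ▸ ENNReal.ofReal_ne_top)
  have hpos : 0 < Z 0 := by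
    rw [← ENNReal.ofReal_pos, ← hZ.self_of_nhds]
    simp [NeZero.ne]
  have hmgf : mgf (fun ω => log ‖f ω‖) P =ᶠ[𝓝 0] Z := by
    filter_upwards [hZ, hz.continuousAt.eventually (lt_mem_nhds hpos)] with t ht hposZ
    rw [mgf, integral_eq_lintegral_of_nonneg_ae (.of_forall fun _ => (exp_pos _).le) (hmeas t),
      hexp, ht, ENNReal.toReal_ofReal hposZ.le]
  rw [← deriv_mgf_zero hinterior, (hz.congr_of_eventuallyEq hmgf).deriv]

end LogNorm

section SqSubSq

lemma lintegral_enorm_im_rpow_muH {t : ℝ} (ht : -3 < t) :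
    ∫⁻ z : sphere (0 : ℍ[ℝ]) 1, ‖(z : ℍ[ℝ]).im‖ₑ ^ t ∂muH =
      ENNReal.ofReal (Gamma ((3 + t) / 2) / (Gamma (3 / 2) * Gamma ((4 + t) / 2))) := by
  have : Fact (finrank ℝ ℍ[ℝ] = 3 + 1) := ⟨Quaternion.finrank_eq_four⟩
  have hdim : finrank ℝ (ℝ ∙ (1 : ℍ[ℝ]))ᗮ = 3 :=
    Submodule.finrank_orthogonal_span_singleton one_ne_zero
  have : Nontrivial (ℝ ∙ (1 : ℍ[ℝ]))ᗮ := nontrivial_of_finrank_pos (R := ℝ) (by omega)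
  simp_rw [im_eq_starProjection]
  rw [lintegral_enorm_starProjection_rpow_muH _ (by rw [hdim]; exact_mod_cast ht), hdim,
    Nat.cast_ofNat]

lemma ae_im_ne_zero : ∀ᵐ z : sphere (0 : ℍ[ℝ]) 1 ∂muH, (z : ℍ[ℝ]).im ≠ 0 :=
  ae_ne_zero_of_lintegral_enorm_rpow_ne_top (t := -1)
    (Quaternion.continuous_im.comp continuous_subtype_val).aestronglyMeasurable (by norm_num)
    (lintegral_enorm_im_rpow_muH (t := -1) (by norm_num) ▸ ENNReal.ofReal_ne_top)

lemma lintegral_enorm_sq_sub_mul_sq_rpow_muH {z : ℍ[ℝ]} (hz : ‖z‖ = 1) (him : z.im ≠ 0) {t : ℝ}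
    (ht : -2 < t) :
    ∫⁻ x : sphere (0 : ℍ[ℝ]) 1, ‖(x : ℍ[ℝ]) ^ 2 - (x * z) ^ 2‖ₑ ^ t ∂muH =
      ENNReal.ofReal (2 ^ t * (Gamma ((2 + t) / 2) / Gamma ((4 + t) / 2))) * ‖z.im‖ₑ ^ t := by
  have hdim := finrank_span_one_pair him
  have : Nontrivial (Submodule.span ℝ {1, z}) := nontrivial_of_finrank_pos (R := ℝ) (by omega)
  have hnorm (x : sphere (0 : ℍ[ℝ]) 1) : ‖(x : ℍ[ℝ]) ^ 2 - (x * z) ^ 2‖ₑ ^ t =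
      ENNReal.ofReal (2 ^ t) * ‖z.im‖ₑ ^ t *
        ‖(Submodule.span ℝ {1, z}).starProjection (x : ℍ[ℝ])‖ₑ ^ t := by
    rw [← ofReal_norm, norm_sq_sub_mul_sq (norm_eq_of_mem_sphere x) hz, ofReal_norm,
      im_mul_add_mul_im, enorm_smul, enorm_mul, mul_left_comm, mul_comm,
      ENNReal.mul_rpow_of_ne_top (by finiteness) (by finiteness),
      ENNReal.mul_rpow_of_ne_top (by finiteness) (by finiteness),
      Real.enorm_of_nonneg two_pos.le, ENNReal.ofReal_rpow_of_pos two_pos]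
  simp_rw [hnorm]
  rw [lintegral_const_mul _ (by fun_prop), lintegral_enorm_starProjection_rpow_muH _
    (by rw [hdim]; exact_mod_cast ht), hdim, mul_right_comm, ← ENNReal.ofReal_mul (by positivity)]
  norm_num

lemma two_rpow_mul_Gamma_div_mul_Gamma_div (t : ℝ) :
    2 ^ t * (Gamma ((2 + t) / 2) / Gamma ((4 + t) / 2)) *
        (Gamma ((3 + t) / 2) / (Gamma (3 / 2) * Gamma ((4 + t) / 2))) =
      Gamma (2 + t) / Gamma (2 + t / 2) ^ 2 := by
  have hduplication : Gamma ((2 + t) / 2) * Gamma ((3 + t) / 2) =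
      Gamma (2 + t) * (2 * 2 ^ t)⁻¹ * √π := by
    convert Gamma_mul_Gamma_add_half ((2 + t) / 2) using 2
    · ring_nf
    · rw [← rpow_neg_one, mul_comm 2, ← rpow_add_one two_ne_zero, ← rpow_mul two_pos.le]
      ring_nf
  have hthreeHalves : Gamma (3 / 2) = √π / 2 := by
    rw [show (3 / 2 : ℝ) = 1 / 2 + 1 by norm_num, Gamma_add_one (by norm_num), Gamma_one_half_eq]
    ring
  have : 0 < √π := by positivity
  calc 2 ^ t * (Gamma ((2 + t) / 2) / Gamma ((4 + t) / 2)) *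
        (Gamma ((3 + t) / 2) / (Gamma (3 / 2) * Gamma ((4 + t) / 2)))
    _ = 2 ^ t * (Gamma ((2 + t) / 2) * Gamma ((3 + t) / 2)) / Gamma (3 / 2) /
        Gamma ((4 + t) / 2) ^ 2 := by ring
    _ = Gamma (2 + t) / Gamma (2 + t / 2) ^ 2 := by
      rw [hduplication, hthreeHalves, show (4 + t) / 2 = 2 + t / 2 by ring]
      field_simp

lemma lintegral_enorm_sq_sub_sq_rpow_muH {t : ℝ} (ht : -2 < t) :
    ∫⁻ p : sphere (0 : ℍ[ℝ]) 1 × sphere (0 : ℍ[ℝ]) 1,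
      ‖(p.1 : ℍ[ℝ]) ^ 2 - (p.2 : ℍ[ℝ]) ^ 2‖ₑ ^ t ∂muH.prod muH =
      ENNReal.ofReal (Gamma (2 + t) / Gamma (2 + t / 2) ^ 2) := by
  calc ∫⁻ p : sphere (0 : ℍ[ℝ]) 1 × sphere (0 : ℍ[ℝ]) 1,
      ‖(p.1 : ℍ[ℝ]) ^ 2 - (p.2 : ℍ[ℝ]) ^ 2‖ₑ ^ t ∂muH.prod muH
    _ = ∫⁻ x : sphere (0 : ℍ[ℝ]) 1, ∫⁻ z : sphere (0 : ℍ[ℝ]) 1,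
        ‖(x : ℍ[ℝ]) ^ 2 - (x * z) ^ 2‖ₑ ^ t ∂muH ∂muH := by
      rw [lintegral_prod _ (by fun_prop)]
      congr with x
      exact (lintegral_mul_left_eq_self _ x).symm
    _ = ∫⁻ z : sphere (0 : ℍ[ℝ]) 1, ∫⁻ x : sphere (0 : ℍ[ℝ]) 1,
        ‖(x : ℍ[ℝ]) ^ 2 - (x * z) ^ 2‖ₑ ^ t ∂muH ∂muH :=
      lintegral_lintegral_swap (by fun_prop)
    _ = ∫⁻ z : sphere (0 : ℍ[ℝ]) 1,
        ENNReal.ofReal (2 ^ t * (Gamma ((2 + t) / 2) / Gamma ((4 + t) / 2))) *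
          ‖(z : ℍ[ℝ]).im‖ₑ ^ t ∂muH := by
      refine lintegral_congr_ae ?_
      filter_upwards [ae_im_ne_zero] with z hz
      exact lintegral_enorm_sq_sub_mul_sq_rpow_muH (norm_eq_of_mem_sphere z) hz ht
    _ = ENNReal.ofReal (2 ^ t * (Gamma ((2 + t) / 2) / Gamma ((4 + t) / 2)) *
          (Gamma ((3 + t) / 2) / (Gamma (3 / 2) * Gamma ((4 + t) / 2)))) := by
      rw [lintegral_const_mul' _ _ ENNReal.ofReal_ne_top, lintegral_enorm_im_rpow_muH (by linarith),
        ← ENNReal.ofReal_mul]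
      have := Gamma_pos_of_pos (show 0 < (2 + t) / 2 by linarith)
      have := Gamma_pos_of_pos (show 0 < (4 + t) / 2 by linarith)
      positivity
    _ = ENNReal.ofReal (Gamma (2 + t) / Gamma (2 + t / 2) ^ 2) := by
      rw [two_rpow_mul_Gamma_div_mul_Gamma_div]

lemma hasDerivAt_Gamma_two_add_div_Gamma_sq :
    HasDerivAt (fun t => Gamma (2 + t) / Gamma (2 + t / 2) ^ 2) 0 0 := by
  have hΓ : HasDerivAt Gamma (deriv Gamma 2) 2 :=
    (differentiableAt_Gamma fun m => by linarith [m.cast_nonneg (α := ℝ)]).hasDerivAt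
  have hnum : HasDerivAt (fun t : ℝ => Gamma (2 + t)) (deriv Gamma 2) 0 :=
    HasDerivAt.comp_const_add 2 0 (by simpa using hΓ)
  have hden : HasDerivAt (fun t : ℝ => Gamma (2 + t / 2)) (deriv Gamma 2 / 2) 0 :=
    (hΓ.comp_of_eq 0 (((hasDerivAt_id 0).div_const 2).const_add 2) (by simp)).congr_deriv (by ring)
  refine (hnum.fun_div (hden.fun_pow 2) (by simp)).congr_deriv ?_
  simp only [add_zero, zero_div, Gamma_two]
  ring

end SqSubSq

/-- the two-variable quaternionic Mahler measure of `x² - y²` vanishes. -/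
theorem mahlerH2_sq_sub_sq : mahlerH2 (fun x y => x ^ 2 - y ^ 2) = 0 := by
  refine integral_log_norm_eq_of_hasDerivAt_lintegral_enorm_rpow (by fun_prop) ?_
    hasDerivAt_Gamma_two_add_div_Gamma_sq
  filter_upwards [Ioi_mem_nhds (show (-2 : ℝ) < 0 by norm_num)] with t ht
  exact lintegral_enorm_sq_sub_sq_rpow_muH ht
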